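/- Let x_{n−1} ≺ … ≺ x_1 ≺ y_{n−1} ≺ … ≺ y_1 ≺ z_{n−1} ≺ … ≺ z_1 be pairwise distinct points of P ordered anticlockwise on the circle (with P containing enough further points to choose right-side n-tuples for the determinant quotients). For positive integers m, l, p with m + l + p = n, set Θ(m,l,p) = E(x^{m+1}, y^{l−1}, z^{p−1} | y_l, z_p) · E(x^{m−1}, y^{l+1}, z^{p−1} | z_p, x_m) · E(x^{m−1}, y^{l−1}, z^{p+1} | x_m, y_l) ∈ Q_n(P). Then for all triples of positive integers (m,l,p) and (m',l',p') with m+l+p = m'+l'+p' = n and l ≥ l': (i) if (m,l,p) = (m',l',p') or l > l'+1, then [Θ(m,l,p), Θ(m',l',p')] = 0; (ii) if l = l'+1, then [Θ(m,l,p), Θ(m',l',p')] equals 1 if m = m', equals −1 if m' = m+1, and equals 0 otherwise. -/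

import Mathlib

noncomputable section

open scoped Classical
open MvPolynomial

set_option maxHeartbeats 1000000
set_option synthInstance.maxHeartbeats 400000

instance fact01 : Fact ((0:ℝ) < 1) := ⟨one_pos⟩

/-- The circle, modelled as `ℝ/ℤ`. -/
abbrev Circle1 : Type := AddCircle (1:ℝ)

/-- The coordinate in `[0,1)` of the point `x` of the circle obtained after removing the
point `o` and identifying the complement of `o` with an interval. -/
def coordAt (o x : Circle1) : ℝ := ((AddCircle.equivIco 1 0) (x - o) : ℝ)

/-- The sign `△` of a real number, as a rational number in `{-1, 0, 1}`. -/
def sgnQ (a : ℝ) : ℚ := if a < 0 then -1 else if a = 0 then 0 else 1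

/-- The linking number `J(rx, sy)` of the chords `rx` and `sy`, computed using the
cut point `o`. -/
def linkingAt (o r x s y : Circle1) : ℚ :=
  (1/2) * (sgnQ (coordAt o r - coordAt o x) * sgnQ (coordAt o r - coordAt o y)
        * sgnQ (coordAt o y - coordAt o x)
      - sgnQ (coordAt o r - coordAt o x) * sgnQ (coordAt o r - coordAt o s)
        * sgnQ (coordAt o s - coordAt o x))

lemma circle1_infinite : Infinite Circle1 := by
  have h : (Set.Ico (0:ℝ) (0+1)).Infinite := Set.Ico_infinite (by norm_num)
  haveI := h.to_subtype
  exact Infinite.of_injective (fun q : Set.Ico (0:ℝ) (0+1) => (AddCircle.equivIco 1 0).symm q)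
    ((AddCircle.equivIco 1 0).symm.injective)

lemma exists_cut (r x s y : Circle1) :
    ∃ o : Circle1, o ≠ r ∧ o ≠ x ∧ o ≠ s ∧ o ≠ y := by
  haveI : Infinite Circle1 := circle1_infinite
  have hfin : ({r, x, s, y} : Set Circle1).Finite :=
    (((Set.finite_singleton y).insert s).insert x).insert r
  obtain ⟨o, ho⟩ := hfin.infinite_compl.nonempty
  simp only [Set.mem_compl_iff, Set.mem_insert_iff, Set.mem_singleton_iff, not_or] at ho
  exact ⟨o, ho.1, ho.2.1, ho.2.2.1, ho.2.2.2⟩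

/-- The linking number `J(rx, sy)` of the chords `rx` and `sy` (computed with respect to
some cut point distinct from the four points; by the independence of the choice this is
the linking number). -/
def linkQ (r x s y : Circle1) : ℚ := linkingAt (exists_cut r x s y).choose r x s y

/-- The set of points of the circle `l`, listed in anticlockwise (cyclic) order:
there is a cut point `o` avoiding them such that the induced coordinates are
strictly increasing along the list. -/
def AnticlockwiseList (l : List Circle1) : Prop :=
  ∃ o : Circle1, (∀ p ∈ l, p ≠ o) ∧ (l.map (coordAt o)).Chain' (· < ·)

/-- Index type for the generators `xy` of the swapping ring of `P`
(one generator for each ordered pair of distinct points; the generators `xx`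
are identified with `0`). -/
abbrev SwapIdx (P : Set Circle1) : Type := {q : (↥P) × (↥P) // q.1 ≠ q.2}

/-- The swapping ring `Z(P)`: the polynomial ring over `K` on the generators `xy`,
`x ≠ y ∈ P` (this realizes the commutative ring generated by all ordered pairs `xy`
subject to the relations `xx = 0`). -/
abbrev SwapRing (K : Type) [Field K] (P : Set Circle1) : Type := MvPolynomial (SwapIdx P) K

/-- The generator `xy` of the swapping ring (equal to `0` when `x = y`). -/
def gen (K : Type) [Field K] (P : Set Circle1) (x y : ↥P) : SwapRing K P :=
  if h : x ≠ y then MvPolynomial.X (⟨(x, y), h⟩ : SwapIdx P) else 0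

/-- The value of the `(c1,c2)`-swapping bracket on two generators `rx` and `sy`:
`J(rx,sy) • (c1 • ry·sx + c2 • rx·sy)`. -/
def genBr (K : Type) [Field K] (P : Set Circle1) (c1 c2 : K) (g g' : SwapIdx P) :
    SwapRing K P :=
  ((linkQ g.1.1.1 g.1.2.1 g'.1.1.1 g'.1.2.1 : ℚ) : K) •
    (c1 • (gen K P g.1.1 g'.1.2 * gen K P g'.1.1 g.1.2)
      + c2 • (gen K P g.1.1 g.1.2 * gen K P g'.1.1 g'.1.2))

/-- The `(c1,c2)`-swapping bracket on `Z(P)`: the biderivation extending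
`{rx, sy} = J(rx,sy)·(c1·ry·sx + c2·rx·sy)` by the Leibniz rule in each argument.
The swapping bracket is the case `c1 = 1, c2 = 0`. -/
def swapBr (K : Type) [Field K] (P : Set Circle1) (c1 c2 : K) (a b : SwapRing K P) :
    SwapRing K P :=
  (MvPolynomial.mkDerivation K
    (fun g : SwapIdx P => (MvPolynomial.mkDerivation K (genBr K P c1 c2 g)) b)) a

/-- `Δ((x_1,…,x_m),(y_1,…,y_m)) = det (x_i y_j)` in the swapping ring. -/
def Dmat (K : Type) [Field K] (P : Set Circle1) (m : ℕ) (xs ys : Fin m → ↥P) :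
    SwapRing K P :=
  Matrix.det (Matrix.of fun i j => gen K P (xs i) (ys j))

/-- The ideal `R_n(P)` of `Z(P)` generated by all `(n+1)×(n+1)` determinants
`Δ((x_1,…,x_{n+1}),(y_1,…,y_{n+1}))`. -/
def Rideal (K : Type) [Field K] (P : Set Circle1) (n : ℕ) : Ideal (SwapRing K P) :=
  Ideal.span {D : SwapRing K P | ∃ xs ys : Fin (n+1) → ↥P, D = Dmat K P (n+1) xs ys}

/-- The rank `n` swapping ring `Z_n(P) = Z(P)/R_n(P)`. -/
abbrev ZnRing (K : Type) [Field K] (P : Set Circle1) (n : ℕ) : Type :=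
  SwapRing K P ⧸ Rideal K P n

/-- The quotient map `Z(P) → Z_n(P)`. -/
def toZn (K : Type) [Field K] (P : Set Circle1) (n : ℕ) :
    SwapRing K P →+* ZnRing K P n := Ideal.Quotient.mk (Rideal K P n)

/-- The total fraction ring `Q_n(P)` of the rank `n` swapping ring. -/
abbrev QnRing (K : Type) [Field K] (P : Set Circle1) (n : ℕ) : Type :=
  Localization (nonZeroDivisors (ZnRing K P n))

/-- The canonical map `Z(P) → Q_n(P)`. -/
def toQn (K : Type) [Field K] (P : Set Circle1) (n : ℕ) :
    SwapRing K P →+* QnRing K P n :=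
  (algebraMap (ZnRing K P n) (QnRing K P n)).comp (toZn K P n)

/-- `Bq` is the extension to the total fraction ring `Q_n(P)` of the `(c1,c2)`-swapping
bracket of the rank `n` swapping algebra: it agrees with the swapping bracket on the image
of `Z(P)` and satisfies the Leibniz rule in both arguments (these properties determine it
uniquely). -/
def IsQnBracket (K : Type) [Field K] (P : Set Circle1) (n : ℕ) (c1 c2 : K)
    (Bq : QnRing K P n → QnRing K P n → QnRing K P n) : Prop :=
  (∀ a b : SwapRing K P,
      Bq (toQn K P n a) (toQn K P n b) = toQn K P n (swapBr K P c1 c2 a b)) ∧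
  (∀ a b c : QnRing K P n, Bq (a * b) c = a * Bq b c + b * Bq a c) ∧
  (∀ a b c : QnRing K P n, Bq a (b * c) = b * Bq a c + c * Bq a b)

/-- The `n`-tuple `(x_1, …, x_a, y_1, …, y_b, z_1, …, z_{n-a-b})` built from three
families of points (families are indexed from `0`, i.e. `x 0 = x_1`). -/
def rows3 {α : Type*} {n : ℕ} (x y z : ℕ → α) (a b : ℕ) : Fin n → α :=
  fun i => if (i : ℕ) < a then x (i : ℕ)
    else if (i : ℕ) < a + b then y ((i : ℕ) - a)
    else z ((i : ℕ) - (a + b))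

/-- The `n`-tuple `(x_1, …, x_a, y_1, …, y_b, z_1, …, z_{n-1-a-b}, w)` built from three
families of points and a final point `w`. -/
def rows3s {α : Type*} {n : ℕ} (x y z : ℕ → α) (a b : ℕ) (w : α) : Fin n → α :=
  fun i => if (i : ℕ) < a then x (i : ℕ)
    else if (i : ℕ) < a + b then y ((i : ℕ) - a)
    else if (i : ℕ) < n - 1 then z ((i : ℕ) - (a + b))
    else w

/-- The `n`-tuple `(x_1, …, x_{n-1}, t)`. -/
def snocTup {α : Type*} {n : ℕ} (x : ℕ → α) (t : α) : Fin n → α :=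
  fun i => if (i : ℕ) < n - 1 then x (i : ℕ) else t

/-- The list `f_a, f_{a-1}, …, f_1` (descending enumeration). -/
def descPts (f : ℕ → Circle1) (a : ℕ) : List Circle1 := ((List.range a).map f).reverse

/-- The list `f_1, f_2, …, f_a` (ascending enumeration). -/
def ascPts (f : ℕ → Circle1) (a : ℕ) : List Circle1 := (List.range a).map f

/-- The `(n×n)`-determinant quotient `Δ(numR, v)/Δ(denR, v)` as an element of the total
fraction ring `Q_n(P)`. -/
def EQuot (K : Type) [Field K] (P : Set Circle1) (n : ℕ)
    (numR denR v : Fin n → ↥P)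
    (h : toZn K P n (Dmat K P n denR v) ∈ nonZeroDivisors (ZnRing K P n)) :
    QnRing K P n :=
  Localization.mk (toZn K P n (Dmat K P n numR v)) ⟨toZn K P n (Dmat K P n denR v), h⟩


/-- The image `Θ(m,l,p)` under the homomorphism `θ` of the `(m,l,p)`-triple ratio of the
triangle `xyz`:
`E(x^{m+1},y^{l-1},z^{p-1} | y_l, z_p) · E(x^{m-1},y^{l+1},z^{p-1} | z_p, x_m)
  · E(x^{m-1},y^{l-1},z^{p+1} | x_m, y_l)`,
computed with the right-side `n`-tuple `v`.  (Families are indexed from `0`, so `x_m` is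
`x (m-1)`, etc.) -/
def thetaTri (K : Type) [Field K] (P : Set Circle1) (n : ℕ) (x y z : ℕ → ↥P)
    (m l p : ℕ) (v : Fin n → ↥P)
    (h1 : toZn K P n (Dmat K P n (rows3s x y z (m+1) (l-1) (z (p-1))) v)
          ∈ nonZeroDivisors (ZnRing K P n))
    (h2 : toZn K P n (Dmat K P n (rows3s x y z (m-1) (l+1) (x (m-1))) v)
          ∈ nonZeroDivisors (ZnRing K P n))
    (h3 : toZn K P n (Dmat K P n (rows3s x y z (m-1) (l-1) (y (l-1))) v)
          ∈ nonZeroDivisors (ZnRing K P n)) : QnRing K P n :=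
  EQuot K P n (rows3s x y z (m+1) (l-1) (y (l-1))) (rows3s x y z (m+1) (l-1) (z (p-1))) v h1
    * EQuot K P n (rows3s x y z (m-1) (l+1) (z (p-1))) (rows3s x y z (m-1) (l+1) (x (m-1))) v h2
    * EQuot K P n (rows3s x y z (m-1) (l-1) (x (m-1))) (rows3s x y z (m-1) (l-1) (y (l-1))) v h3

lemma my_leib {R A : Type*} [CommRing R] [CommRing A] [Algebra R A] (D : Derivation R A A)
    {ι : Type*} [DecidableEq ι] (s : Finset ι) (f : ι → A) :
    D (∏ i ∈ s, f i) = ∑ i ∈ s, (∏ j ∈ s.erase i, f j) * D (f i) := by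
  induction s using Finset.induction_on with
  | empty => simp
  | insert a s ha ih =>
    rw [Finset.prod_insert ha, D.leibniz, ih, Finset.sum_insert ha, Finset.erase_insert ha,
      smul_eq_mul, smul_eq_mul, Finset.mul_sum, add_comm]
    congr 1
    apply Finset.sum_congr rfl
    intro i hi
    have hne : i ≠ a := fun h => ha (h ▸ hi)
    rw [Finset.erase_insert_of_ne hne.symm, Finset.prod_insert (by simp [ha])]
    ring

lemma my_det {R A : Type*} [CommRing R] [CommRing A] [Algebra R A] (D : Derivation R A A)
    {n : ℕ} (M : Matrix (Fin n) (Fin n) A) :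
    D M.det = ∑ k, ∑ i, M.adjugate k i * D (M i k) := by
  have h1 : ∀ k, ∑ i, M.adjugate k i * D (M i k) = (M.updateCol k (fun i => D (M i k))).det := by
    intro k
    rw [← Matrix.cramer_apply, Matrix.cramer_eq_adjugate_mulVec]
    rfl
  simp_rw [h1, Matrix.det_apply, map_sum]
  rw [Finset.sum_comm]
  apply Finset.sum_congr rfl
  intro σ _
  rw [Units.smul_def, map_zsmul, my_leib, Finset.smul_sum]
  apply Finset.sum_congr rfl
  intro k _
  rw [Units.smul_def, ← Finset.prod_erase_mul _ _ (Finset.mem_univ k)]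
  congr 2
  · apply Finset.prod_congr rfl
    intro j hj
    rw [Matrix.updateCol_ne (Finset.ne_of_mem_erase hj)]
  · simp

lemma coordAt_coe (o x : Circle1) : ((coordAt o x : ℝ) : Circle1) = x - o :=
  AddCircle.coe_equivIco (p := (1:ℝ)) (a := 0)

lemma coordAt_nonneg (o x : Circle1) : 0 ≤ coordAt o x :=
  ((AddCircle.equivIco (1:ℝ) 0) (x - o)).2.1

lemma coordAt_lt (o x : Circle1) : coordAt o x < 1 := by
  have := ((AddCircle.equivIco (1:ℝ) 0) (x - o)).2.2
  simpa [coordAt] using this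

lemma coordAt_change (o o' x : Circle1) :
    coordAt o' x = coordAt o x + coordAt o' o ∨ coordAt o' x = coordAt o x + coordAt o' o - 1 := by
  have h : ((coordAt o' x - coordAt o x - coordAt o' o : ℝ) : Circle1) = 0 := by
    rw [AddCircle.coe_sub, AddCircle.coe_sub, coordAt_coe, coordAt_coe, coordAt_coe]
    abel
  rw [AddCircle.coe_eq_zero_iff] at h
  obtain ⟨k, hk⟩ := h
  have e1 := coordAt_nonneg o x
  have e2 := coordAt_lt o x
  have e3 := coordAt_nonneg o' x
  have e4 := coordAt_lt o' x
  have e5 := coordAt_nonneg o' o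
  have e6 := coordAt_lt o' o
  simp only [zsmul_eq_mul, mul_one] at hk
  have a1 : (k:ℝ) < 1 := by linarith
  have a2 : (-2:ℝ) < k := by linarith
  have b1 : k < 1 := by exact_mod_cast a1
  have b2 : -2 < k := by exact_mod_cast a2
  have : k = 0 ∨ k = -1 := by omega
  rcases this with rfl | rfl
  · left; push_cast at hk; linarith
  · right; push_cast at hk; linarith

lemma sgnQ_change (o o' : Circle1) : ∃ W : Circle1 → ℚ, ∀ r y,
    sgnQ (coordAt o' r - coordAt o' y) = sgnQ (coordAt o r - coordAt o y) - 2 * (W r - W y) := by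
  refine ⟨fun r => if coordAt o' r = coordAt o r + coordAt o' o then 0 else 1, fun r y => ?_⟩
  have hr := coordAt_change o o' r
  have hy := coordAt_change o o' y
  have e1 := coordAt_nonneg o r
  have e2 := coordAt_lt o r
  have e1' := coordAt_nonneg o y
  have e2' := coordAt_lt o y
  have e3 := coordAt_nonneg o' r
  have e4 := coordAt_lt o' r
  have e3' := coordAt_nonneg o' y
  have e4' := coordAt_lt o' y
  have hw0 : ∀ r : Circle1, coordAt o' r = coordAt o r + coordAt o' o →
      (if coordAt o' r = coordAt o r + coordAt o' o then (0:ℚ) else 1) = 0 := fun r h => if_pos h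
  have hw1 : ∀ r : Circle1, coordAt o' r = coordAt o r + coordAt o' o - 1 →
      (if coordAt o' r = coordAt o r + coordAt o' o then (0:ℚ) else 1) = 1 :=
    fun r h => if_neg (by linarith)
  beta_reduce
  rcases hr with hr | hr <;> rcases hy with hy | hy
  · rw [hw0 r hr, hw0 y hy, hr, hy]; simp
  · rw [hw0 r hr, hw1 y hy]
    unfold sgnQ
    rw [if_neg (by linarith), if_neg (by linarith), if_pos (by linarith)]; norm_num
  · rw [hw1 r hr, hw0 y hy]
    unfold sgnQ
    rw [if_pos (by linarith), if_neg (by linarith), if_neg (by linarith)]; norm_num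
  · rw [hw1 r hr, hw1 y hy, hr, hy]; simp

lemma sgnQ_neg (a b : ℝ) : sgnQ (a - b) = - sgnQ (b - a) := by
  unfold sgnQ
  rcases lt_trichotomy a b with h | h | h
  · rw [if_pos (by linarith), if_neg (by linarith), if_neg (by linarith)]
  · subst h; simp
  · rw [if_neg (by linarith), if_neg (by linarith), if_pos (by linarith)]; norm_num

lemma sgnQ_pos {a b : ℝ} (h : a < b) : sgnQ (b - a) = 1 := by
  unfold sgnQ; rw [if_neg (by linarith), if_neg (by linarith)]

lemma sgnQ_lt {a b : ℝ} (h : a < b) : sgnQ (a - b) = -1 := by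
  unfold sgnQ; rw [if_pos (by linarith)]

lemma sgnQ_self (a : ℝ) : sgnQ (a - a) = 0 := by simp [sgnQ]

lemma sgnQ_tri (r x y : ℝ) : sgnQ (r - x) * sgnQ (r - y) * sgnQ (y - x) =
    sgnQ (r - y) + sgnQ (y - x) + sgnQ (x - r) := by
  rcases lt_trichotomy r x with h1 | h1 | h1 <;> rcases lt_trichotomy r y with h2 | h2 | h2 <;>
  rcases lt_trichotomy y x with h3 | h3 | h3 <;> first
   | (exfalso; linarith)
   | (subst_vars; simp only [sgnQ_self, sgnQ_pos, sgnQ_lt, *]; norm_num)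

lemma linkQ_eq (o r x s y : Circle1) : linkQ r x s y = (1/2) *
    (sgnQ (coordAt o r - coordAt o y) + sgnQ (coordAt o y - coordAt o x)
    + sgnQ (coordAt o x - coordAt o s) + sgnQ (coordAt o s - coordAt o r)) := by
  unfold linkQ linkingAt
  generalize (exists_cut r x s y).choose = o'
  rw [sgnQ_tri, sgnQ_tri]
  obtain ⟨W, hW⟩ := sgnQ_change o o'
  simp only [hW]
  rw [sgnQ_neg (coordAt o r) (coordAt o s), sgnQ_neg (coordAt o s) (coordAt o x)]
  ring

lemma mat_id {A : Type*} [CommRing A] {n : ℕ} (M N : Matrix (Fin n) (Fin n) A)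
    (p q r s : Fin n → Fin n → A) (hq : ∀ k, q k k = 0) :
    ∑ k, ∑ i, M.adjugate k i * ∑ m, ∑ j, N.adjugate m j *
      ((p i m + q m k + r k j + s j i) * (M i m * N j k)) =
    ∑ j, ∑ i, s j i * ((N * M.adjugate) j i * (M * N.adjugate) i j)
     + (∑ i, ∑ m, p i m * (M i m * M.adjugate m i)) * N.det
     + M.det * (∑ k, ∑ j, r k j * (N j k * N.adjugate k j)) := by
  have hM := Matrix.adjugate_mul M
  have hN := Matrix.adjugate_mul N
  have h1 : ∀ k m, ∑ i, M.adjugate k i * M i m = M.det * (1 : Matrix (Fin n) (Fin n) A) k m := by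
    intro k m; have := congrFun (congrFun hM k) m; simpa [Matrix.mul_apply] using this
  have h2 : ∀ k m, ∑ i, N.adjugate k i * N i m = N.det * (1 : Matrix (Fin n) (Fin n) A) k m := by
    intro k m; have := congrFun (congrFun hN k) m; simpa [Matrix.mul_apply] using this
  have e0 : ∑ k, ∑ i, M.adjugate k i * ∑ m, ∑ j, N.adjugate m j *
      ((p i m + q m k + r k j + s j i) * (M i m * N j k)) =
      (∑ k, ∑ i, ∑ m, ∑ j, p i m * M i m * M.adjugate k i * (N.adjugate m j * N j k))
      + (∑ k, ∑ i, ∑ m, ∑ j, q m k * (M.adjugate k i * M i m) * (N.adjugate m j * N j k))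
      + (∑ k, ∑ i, ∑ m, ∑ j, r k j * N j k * N.adjugate m j * (M.adjugate k i * M i m))
      + (∑ k, ∑ i, ∑ m, ∑ j, s j i * ((N j k * M.adjugate k i) * (M i m * N.adjugate m j))) := by
    simp only [← Finset.sum_add_distrib, Finset.mul_sum]
    refine Finset.sum_congr rfl fun k _ => Finset.sum_congr rfl fun i _ =>
      Finset.sum_congr rfl fun m _ => Finset.sum_congr rfl fun j _ => ?_
    ring
  have e1 : (∑ k, ∑ i, ∑ m, ∑ j, p i m * M i m * M.adjugate k i * (N.adjugate m j * N j k))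
     = (∑ i, ∑ m, p i m * (M i m * M.adjugate m i)) * N.det := by
    simp only [← Finset.mul_sum, h2]
    rw [Finset.sum_comm, Finset.sum_mul]
    refine Finset.sum_congr rfl fun i _ => ?_
    rw [Finset.sum_comm, Finset.sum_mul]
    refine Finset.sum_congr rfl fun m _ => ?_
    simp [Matrix.one_apply]
    ring
  have e2 : (∑ k, ∑ i, ∑ m, ∑ j, q m k * (M.adjugate k i * M i m) * (N.adjugate m j * N j k)) = 0 := by
    simp only [← Finset.mul_sum, h2]
    refine Finset.sum_eq_zero fun k _ => Finset.sum_eq_zero fun i _ => Finset.sum_eq_zero fun m _ => ?_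
    by_cases h : m = k
    · subst h; simp [hq]
    · simp [h]
  have e3 : (∑ k, ∑ i, ∑ m, ∑ j, r k j * N j k * N.adjugate m j * (M.adjugate k i * M i m))
     = M.det * (∑ k, ∑ j, r k j * (N j k * N.adjugate k j)) := by
    rw [Finset.mul_sum]
    refine Finset.sum_congr rfl fun k _ => ?_
    have : ∑ i, ∑ m, ∑ j, r k j * N j k * N.adjugate m j * (M.adjugate k i * M i m)
      = ∑ m, ∑ j, ∑ i, r k j * N j k * N.adjugate m j * (M.adjugate k i * M i m) := by
      rw [Finset.sum_comm]
      exact Finset.sum_congr rfl fun m _ => Finset.sum_comm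
    rw [this]
    simp only [← Finset.mul_sum, h1]
    rw [Finset.sum_comm, Finset.mul_sum]
    refine Finset.sum_congr rfl fun j _ => ?_
    simp [Matrix.one_apply]
    ring
  have e4 : (∑ k, ∑ i, ∑ m, ∑ j, s j i * ((N j k * M.adjugate k i) * (M i m * N.adjugate m j)))
     = ∑ j, ∑ i, s j i * ((N * M.adjugate) j i * (M * N.adjugate) i j) := by
    simp only [Matrix.mul_apply]
    have : ∀ f : Fin n → Fin n → Fin n → Fin n → A, ∑ k, ∑ i, ∑ m, ∑ j, f k i m j
      = ∑ j, ∑ i, ∑ k, ∑ m, f k i m j := by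
      intro f
      calc _ = ∑ k, ∑ i, ∑ j, ∑ m, f k i m j := 
            Finset.sum_congr rfl fun k _ => Finset.sum_congr rfl fun i _ => Finset.sum_comm
        _ = ∑ k, ∑ j, ∑ i, ∑ m, f k i m j := 
            Finset.sum_congr rfl fun k _ => Finset.sum_comm
        _ = ∑ j, ∑ k, ∑ i, ∑ m, f k i m j := Finset.sum_comm
        _ = _ := Finset.sum_congr rfl fun k _ => Finset.sum_comm
    rw [this]
    simp only [Finset.sum_mul, Finset.mul_sum]
    refine Finset.sum_congr rfl fun j _ => Finset.sum_congr rfl fun i _ => Finset.sum_comm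
  rw [e0, e1, e2, e3, e4]
  ring

/-- abbreviations -/
def gmat (K : Type) [Field K] (P : Set Circle1) {n : ℕ} (v a : Fin n → ↥P) :
    Matrix (Fin n) (Fin n) (SwapRing K P) := Matrix.of fun i j => gen K P (a i) (v j)

def sgm (K : Type) [Field K] (P : Set Circle1) (o : Circle1) (a b : ↥P) : SwapRing K P :=
  C ((sgnQ (coordAt o a - coordAt o b) : ℚ) : K)

def Ht (K : Type) [Field K] (P : Set Circle1) {n : ℕ} (o : Circle1) (v a b : Fin n → ↥P) :
    SwapRing K P :=
  ∑ j, ∑ i, sgm K P o (b j) (a i) *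
    ((gmat K P v b * (gmat K P v a).adjugate) j i * (gmat K P v a * (gmat K P v b).adjugate) i j)

def Gt (K : Type) [Field K] (P : Set Circle1) {n : ℕ} (o : Circle1) (v a : Fin n → ↥P) :
    SwapRing K P :=
  ∑ i, ∑ m, sgm K P o (a i) (v m) * (gmat K P v a i m * (gmat K P v a).adjugate m i)

lemma sgm_neg (K : Type) [Field K] [CharZero K] (P : Set Circle1) (o : Circle1) (a b : ↥P) :
    sgm K P o a b = - sgm K P o b a := by
  unfold sgm; rw [sgnQ_neg]; simp

lemma gen_br (K : Type) [Field K] [CharZero K] (P : Set Circle1) (o : Circle1) (r x s y : ↥P) :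
    2 * swapBr K P 1 0 (gen K P r x) (gen K P s y) =
      (sgm K P o r y + sgm K P o y x + sgm K P o x s + sgm K P o s r) *
        (gen K P r y * gen K P s x) := by
  by_cases h1 : r = x
  · subst h1
    have : sgm K P o r y + sgm K P o y r + sgm K P o r s + sgm K P o s r = 0 := by
      rw [sgm_neg K P o y r, sgm_neg K P o s r]; ring
    rw [this]; simp [gen, swapBr]
  by_cases h2 : s = y
  · subst h2
    have : sgm K P o r s + sgm K P o s x + sgm K P o x s + sgm K P o s r = 0 := by
      rw [sgm_neg K P o s r, sgm_neg K P o s x]; ring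
    rw [this]
    have : gen K P s s = 0 := by simp [gen]
    have g1 : gen K P r x = X (⟨(r,x),h1⟩ : SwapIdx P) := by simp [gen, h1]
    rw [this, g1, swapBr, mkDerivation_X, map_zero]
    ring
  have g1 : gen K P r x = X (⟨(r,x),h1⟩ : SwapIdx P) := by simp [gen, h1]
  have g2 : gen K P s y = X (⟨(s,y),h2⟩ : SwapIdx P) := by simp [gen, h2]
  rw [g1, g2, swapBr, mkDerivation_X, mkDerivation_X, genBr, linkQ_eq o]
  simp only [one_smul, zero_smul, add_zero, sgm, MvPolynomial.smul_eq_C_mul]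
  rw [← C_add, ← C_add, ← C_add, ← mul_assoc]
  congr 1
  have : (2 : SwapRing K P) = C 2 := (map_ofNat C 2).symm
  rw [this, ← C_mul]
  push_cast
  ring_nf

lemma det_br (K : Type) [Field K] [CharZero K] (P : Set Circle1) {n : ℕ} (o : Circle1)
    (v a b : Fin n → ↥P) :
    2 * swapBr K P 1 0 (Dmat K P n a v) (Dmat K P n b v) =
      Ht K P o v a b + Gt K P o v a * Dmat K P n b v - Dmat K P n a v * Gt K P o v b := by
  have hD : ∀ a, Dmat K P n a v = (gmat K P v a).det := fun _ => rfl
  have s1 : ∀ c, swapBr K P 1 0 (gmat K P v a).det c = ∑ k, ∑ i, (gmat K P v a).adjugate k i *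
      swapBr K P 1 0 (gen K P (a i) (v k)) c := fun c => my_det _ _
  have s2 : ∀ r x : ↥P, swapBr K P 1 0 (gen K P r x) (gmat K P v b).det =
     ∑ m, ∑ j, (gmat K P v b).adjugate m j * swapBr K P 1 0 (gen K P r x) (gen K P (b j) (v m)) := by
    intro r x
    by_cases h1 : r = x
    · subst h1; simp [gen, swapBr]
    have g1 : gen K P r x = X (⟨(r,x),h1⟩ : SwapIdx P) := by simp [gen, h1]
    simp only [g1, swapBr, mkDerivation_X]
    exact my_det _ _
  rw [hD, hD, s1]
  have key := mat_id (gmat K P v a) (gmat K P v b) (fun i m => sgm K P o (a i) (v m))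
    (fun m k => sgm K P o (v m) (v k)) (fun k j => sgm K P o (v k) (b j))
    (fun j i => sgm K P o (b j) (a i)) (by intro k; simp [sgm, sgnQ])
  have l : 2 * ∑ k, ∑ i, (gmat K P v a).adjugate k i *
      swapBr K P 1 0 (gen K P (a i) (v k)) (gmat K P v b).det = 
      ∑ k, ∑ i, (gmat K P v a).adjugate k i * ∑ m, ∑ j, (gmat K P v b).adjugate m j *
      ((sgm K P o (a i) (v m) + sgm K P o (v m) (v k) + sgm K P o (v k) (b j)
        + sgm K P o (b j) (a i)) * (gmat K P v a i m * gmat K P v b j k)) := by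
    rw [Finset.mul_sum]
    refine Finset.sum_congr rfl fun k _ => ?_
    rw [Finset.mul_sum]
    refine Finset.sum_congr rfl fun i _ => ?_
    rw [s2, mul_left_comm, Finset.mul_sum]
    congr 1
    refine Finset.sum_congr rfl fun m _ => ?_
    rw [Finset.mul_sum]
    refine Finset.sum_congr rfl fun j _ => ?_
    rw [mul_left_comm, gen_br K P o]
    rfl
  rw [l, key]
  have h3 : ∑ k, ∑ j, sgm K P o (v k) (b j) * (gmat K P v b j k * (gmat K P v b).adjugate k j)
     = - Gt K P o v b := by
    rw [Gt, Finset.sum_comm, ← Finset.sum_neg_distrib]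
    refine Finset.sum_congr rfl fun k _ => ?_
    rw [← Finset.sum_neg_distrib]
    refine Finset.sum_congr rfl fun j _ => ?_
    rw [sgm_neg]; ring
  rw [h3]
  unfold Ht Gt
  ring

lemma Ht_neg (K : Type) [Field K] [CharZero K] (P : Set Circle1) {n : ℕ} (o : Circle1)
    (v a b : Fin n → ↥P) : Ht K P o v a b = - Ht K P o v b a := by
  unfold Ht
  rw [Finset.sum_comm, ← Finset.sum_neg_distrib]
  refine Finset.sum_congr rfl fun k _ => ?_
  rw [← Finset.sum_neg_distrib]
  refine Finset.sum_congr rfl fun j _ => ?_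
  rw [sgm_neg]; ring

lemma mt_row (K : Type) [Field K] (P : Set Circle1) {n : ℕ}
    (v a b : Fin n → ↥P) (i0 j : Fin n) (h : b j = a i0) (i : Fin n) (hi : i ≠ i0) :
    (gmat K P v b * (gmat K P v a).adjugate) j i = 0 := by
  have : (gmat K P v b * (gmat K P v a).adjugate) j i = (gmat K P v a * (gmat K P v a).adjugate) i0 i := by
    simp [Matrix.mul_apply, gmat, h]
  rw [this, Matrix.mul_adjugate]
  simp [hi.symm]

lemma Ht_val (K : Type) [Field K] [CharZero K] (P : Set Circle1) {n : ℕ} (o : Circle1)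
    (v a b : Fin n → ↥P) (s : ↥P → ℚ)
    (hs : ∀ i j, a i ∉ Set.range b → b j ∉ Set.range a →
      sgnQ (coordAt o (b j) - coordAt o (a i)) = s (b j)) :
    Ht K P o v a b = C (((∑ j, if b j ∈ Set.range a then 0 else s (b j) : ℚ)) : K) *
      (Dmat K P n a v * Dmat K P n b v) := by
  rw [Ht]
  rw [Rat.cast_sum, map_sum, Finset.sum_mul]
  refine Finset.sum_congr rfl fun j _ => ?_
  by_cases hj : b j ∈ Set.range a
  · rw [if_pos hj]
    rw [Rat.cast_zero, C_0, zero_mul]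
    obtain ⟨i0, hi0⟩ := hj
    refine Finset.sum_eq_zero fun i _ => ?_
    by_cases hi : i = i0
    · subst hi; rw [← hi0]; simp [sgm, sgnQ]
    · rw [mt_row K P v a b i0 j hi0.symm i hi]; simp
  · rw [if_neg hj]
    have e : ∀ i, sgm K P o (b j) (a i) * ((gmat K P v b * (gmat K P v a).adjugate) j i *
        (gmat K P v a * (gmat K P v b).adjugate) i j) = C ((s (b j) : ℚ) : K) *
        ((gmat K P v b * (gmat K P v a).adjugate) j i * (gmat K P v a * (gmat K P v b).adjugate) i j) := by
      intro i
      by_cases hi : a i ∈ Set.range b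
      · obtain ⟨j0, hj0⟩ := hi
        have : j ≠ j0 := by rintro rfl; exact hj ⟨i, hj0.symm⟩
        rw [mt_row K P v b a j0 i hj0.symm j this]; simp
      · rw [sgm, hs i j hi hj]
    simp only [e, ← Finset.mul_sum]
    congr 1
    rw [← Matrix.mul_apply, Matrix.mul_assoc, ← Matrix.mul_assoc (gmat K P v a).adjugate,
      Matrix.adjugate_mul]
    simp only [Matrix.smul_mul, Matrix.mul_smul, Matrix.one_mul, Matrix.mul_adjugate]
    simp [Dmat, gmat]

def IsRows {α : Type*} {n : ℕ} (x y z : ℕ → α) (a : Fin n → α) (i j k : ℕ) : Prop :=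
  Multiset.map a Finset.univ.val =
    (Multiset.range i).map x + (Multiset.range j).map y + (Multiset.range k).map z

structure Cfg {P : Set Circle1} (o : Circle1) (x y z : ℕ → ↥P) (N : ℕ) : Prop where
  xy : ∀ i < N, ∀ j < N, coordAt o (x i) < coordAt o (y j)
  yz : ∀ i < N, ∀ j < N, coordAt o (y i) < coordAt o (z j)
  xz : ∀ i < N, ∀ j < N, coordAt o (x i) < coordAt o (z j)
  xx : ∀ i < N, ∀ j < N, x i = x j → i = j
  yy : ∀ i < N, ∀ j < N, y i = y j → i = j
  zz : ∀ i < N, ∀ j < N, z i = z j → i = j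

lemma desc_pair {P : Set Circle1} (o : Circle1) (x : ℕ → ↥P) (N : ℕ)
    (h : (descPts (fun i => (x i : Circle1)) N).Pairwise (fun a b => coordAt o a < coordAt o b)) :
    ∀ i < N, ∀ j < N, x i = x j → i = j := by
  unfold descPts at h
  rw [List.pairwise_reverse, List.pairwise_map] at h
  have h' : ∀ i j, i < j → j < N → coordAt o (x j) < coordAt o (x i) := by
    intro i j hij hj
    have := List.pairwise_iff_getElem.1 h i j (by simp; omega) (by simp; omega) hij
    simpa using this
  intro i hi j hj e
  rcases lt_trichotomy i j with hl | hl | hl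
  · have := h' i j hl hj; rw [e] at this; exact absurd this (lt_irrefl _)
  · exact hl
  · have := h' j i hl hi; rw [e] at this; exact absurd this (lt_irrefl _)

lemma cfg_of {P : Set Circle1} (x y z : ℕ → ↥P) (N : ℕ)
    (hcfg : AnticlockwiseList
      (descPts (fun i => ((x i : Circle1))) N ++ descPts (fun i => ((y i : Circle1))) N
        ++ descPts (fun i => ((z i : Circle1))) N)) : ∃ o, Cfg o x y z N := by
  obtain ⟨o, -, h⟩ := hcfg
  refine ⟨o, ?_⟩
  have h2 := List.isChain_iff_pairwise.1 h
  rw [List.pairwise_map, List.pairwise_append, List.pairwise_append] at h2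
  obtain ⟨⟨h1, h2, h3⟩, h4, h5⟩ := h2
  have mem : ∀ (f : ℕ → ↥P) i, i < N → (f i : Circle1) ∈ descPts (fun i => (f i : Circle1)) N := by
    intro f i hi
    simp only [descPts, List.mem_reverse, List.mem_map, List.mem_range]
    exact ⟨i, hi, rfl⟩
  constructor
  · intro i hi j hj; exact h3 _ (mem x i hi) _ (mem y j hj)
  · intro i hi j hj; exact h5 _ (List.mem_append_right _ (mem y i hi)) _ (mem z j hj)
  · intro i hi j hj; exact h5 _ (List.mem_append_left _ (mem x i hi)) _ (mem z j hj)
  · exact desc_pair o x N h1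
  · exact desc_pair o y N h2
  · exact desc_pair o z N h4

lemma IsRows.mem {α : Type*} {n : ℕ} {x y z : ℕ → α} {a : Fin n → α} {i j k : ℕ}
    (h : IsRows x y z a i j k) (q : α) : q ∈ Set.range a ↔
      (∃ r < i, x r = q) ∨ (∃ r < j, y r = q) ∨ (∃ r < k, z r = q) := by
  have : q ∈ Set.range a ↔ q ∈ Multiset.map a Finset.univ.val := by simp
  rw [this, h]
  simp only [Multiset.mem_add, Multiset.mem_map, Multiset.mem_range, or_assoc]

lemma IsRows.sum {α : Type*} {n : ℕ} {x y z : ℕ → α} {a : Fin n → α} {i j k : ℕ}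
    (h : IsRows x y z a i j k) (f : α → ℚ) : ∑ r, f (a r) =
      ∑ r ∈ Finset.range i, f (x r) + ∑ r ∈ Finset.range j, f (y r)
        + ∑ r ∈ Finset.range k, f (z r) := by
  have := congrArg (fun s => (Multiset.map f s).sum) h
  simpa [Multiset.map_map, Finset.sum, Function.comp_def] using this

lemma sum_cut (c : ℚ) (i i' : ℕ) :
    ∑ r ∈ Finset.range i', (if r < i then (0:ℚ) else c) = c * ((i' - i : ℕ) : ℚ) := by
  induction i' with
  | zero => simp
  | succ k ih =>
    rw [Finset.sum_range_succ, ih]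
    by_cases h : k < i
    · rw [if_pos h, Nat.sub_eq_zero_of_le h.le, Nat.sub_eq_zero_of_le h]; simp
    · rw [if_neg h, Nat.sub_add_comm (by omega)]; push_cast; ring

lemma Ht_rows_aux (K : Type) [Field K] [CharZero K] (P : Set Circle1) {n N : ℕ} (o : Circle1)
    (v a b : Fin n → ↥P) (x y z : ℕ → ↥P) (hc : Cfg o x y z N) (i j k i' j' k' : ℕ)
    (ha : IsRows x y z a i j k) (hb : IsRows x y z b i' j' k')
    (hi : i ≤ N) (hj : j ≤ N) (hk : k ≤ N) (hi' : i' ≤ N) (hj' : j' ≤ N) (hk' : k' ≤ N)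
    (sx sy sz : ℚ) (hxy : i' < i → j < j' → sy = 1) (hxz : i' < i → k < k' → sz = 1)
    (hyx : j' < j → i < i' → sx = -1) (hyz : j' < j → k < k' → sz = 1)
    (hzx : k' < k → i < i' → sx = -1) (hzy : k' < k → j < j' → sy = -1) :
    Ht K P o v a b = C (((sx * ((i' - i : ℕ) : ℚ) + sy * ((j' - j : ℕ) : ℚ)
      + sz * ((k' - k : ℕ) : ℚ) : ℚ)) : K) * (Dmat K P n a v * Dmat K P n b v) := by
  let s : ↥P → ℚ := fun q => if ∃ r < N, x r = q then sx else if ∃ r < N, y r = q then sy else sz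
  have nxy : ∀ i < N, ∀ j < N, x i ≠ y j := fun i hi j hj e => by
    have := hc.xy i hi j hj; rw [e] at this; exact lt_irrefl _ this
  have nxz : ∀ i < N, ∀ j < N, x i ≠ z j := fun i hi j hj e => by
    have := hc.xz i hi j hj; rw [e] at this; exact lt_irrefl _ this
  have nyz : ∀ i < N, ∀ j < N, y i ≠ z j := fun i hi j hj e => by
    have := hc.yz i hi j hj; rw [e] at this; exact lt_irrefl _ this
  have s1 : ∀ r < N, s (x r) = sx := fun r hr => if_pos ⟨r, hr, rfl⟩
  have s2 : ∀ r < N, s (y r) = sy := fun r hr => by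
    simp only [s]
    rw [if_neg, if_pos ⟨r, hr, rfl⟩]
    rintro ⟨q, hq, e⟩; exact nxy q hq r hr e
  have s3 : ∀ r < N, s (z r) = sz := fun r hr => by
    simp only [s]
    rw [if_neg, if_neg]
    · rintro ⟨q, hq, e⟩; exact nyz q hq r hr e
    · rintro ⟨q, hq, e⟩; exact nxz q hq r hr e
  have mx : ∀ (a : Fin n → ↥P) i j k, IsRows x y z a i j k → i ≤ N → j ≤ N → k ≤ N →
      ∀ r < N, x r ∈ Set.range a ↔ r < i := by
    intro a i j k ha hi hj hk r hr
    rw [ha.mem]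
    constructor
    · rintro (⟨q, hq, e⟩ | ⟨q, hq, e⟩ | ⟨q, hq, e⟩)
      · have := hc.xx q (by omega) r hr e; omega
      · exact absurd e.symm (nxy r hr q (by omega))
      · exact absurd e.symm (nxz r hr q (by omega))
    · intro h; exact Or.inl ⟨r, h, rfl⟩
  have my : ∀ (a : Fin n → ↥P) i j k, IsRows x y z a i j k → i ≤ N → j ≤ N → k ≤ N →
      ∀ r < N, y r ∈ Set.range a ↔ r < j := by
    intro a i j k ha hi hj hk r hr
    rw [ha.mem]
    constructor
    · rintro (⟨q, hq, e⟩ | ⟨q, hq, e⟩ | ⟨q, hq, e⟩)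
      · exact absurd e (nxy q (by omega) r hr)
      · have := hc.yy q (by omega) r hr e; omega
      · exact absurd e.symm (nyz r hr q (by omega))
    · intro h; exact Or.inr (Or.inl ⟨r, h, rfl⟩)
  have mz : ∀ (a : Fin n → ↥P) i j k, IsRows x y z a i j k → i ≤ N → j ≤ N → k ≤ N →
      ∀ r < N, z r ∈ Set.range a ↔ r < k := by
    intro a i j k ha hi hj hk r hr
    rw [ha.mem]
    constructor
    · rintro (⟨q, hq, e⟩ | ⟨q, hq, e⟩ | ⟨q, hq, e⟩)
      · exact absurd e (nxz q (by omega) r hr)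
      · exact absurd e (nyz q (by omega) r hr)
      · have := hc.zz q (by omega) r hr e; omega
    · intro h; exact Or.inr (Or.inr ⟨r, h, rfl⟩)
  rw [Ht_val K P o v a b s]
  · congr 3
    rw [hb.sum (fun q => if q ∈ Set.range a then 0 else s q), ← sum_cut, ← sum_cut, ← sum_cut]
    congr 1
    · congr 1
      · refine Finset.sum_congr rfl fun r hr => ?_
        have hr' : r < N := by have := Finset.mem_range.1 hr; omega
        simp only [mx a i j k ha hi hj hk r hr', s1 r hr']
      · refine Finset.sum_congr rfl fun r hr => ?_
        have hr' : r < N := by have := Finset.mem_range.1 hr; omega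
        simp only [my a i j k ha hi hj hk r hr', s2 r hr']
    · refine Finset.sum_congr rfl fun r hr => ?_
      have hr' : r < N := by have := Finset.mem_range.1 hr; omega
      simp only [mz a i j k ha hi hj hk r hr', s3 r hr']
  · intro e f he hf
    have he1 := (ha.mem (a e)).1 ⟨e, rfl⟩
    have hf1 := (hb.mem (b f)).1 ⟨f, rfl⟩
    rcases he1 with ⟨q, hq, e1⟩ | ⟨q, hq, e1⟩ | ⟨q, hq, e1⟩ <;>
    rcases hf1 with ⟨r, hr, e2⟩ | ⟨r, hr, e2⟩ | ⟨r, hr, e2⟩ <;>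
    rw [← e1] at he <;> rw [← e2] at hf <;> rw [← e1, ← e2] <;>
    (try rw [mx b i' j' k' hb hi' hj' hk' q (by omega)] at he) <;>
    (try rw [my b i' j' k' hb hi' hj' hk' q (by omega)] at he) <;>
    (try rw [mz b i' j' k' hb hi' hj' hk' q (by omega)] at he) <;>
    (try rw [mx a i j k ha hi hj hk r (by omega)] at hf) <;>
    (try rw [my a i j k ha hi hj hk r (by omega)] at hf) <;>
    (try rw [mz a i j k ha hi hj hk r (by omega)] at hf) <;>
    (try (exfalso; omega))
    · rw [s2 r (by omega), hxy (by omega) (by omega)]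
      exact sgnQ_pos (hc.xy q (by omega) r (by omega))
    · rw [s3 r (by omega), hxz (by omega) (by omega)]
      exact sgnQ_pos (hc.xz q (by omega) r (by omega))
    · rw [s1 r (by omega), hyx (by omega) (by omega)]
      exact sgnQ_lt (hc.xy r (by omega) q (by omega))
    · rw [s3 r (by omega), hyz (by omega) (by omega)]
      exact sgnQ_pos (hc.yz q (by omega) r (by omega))
    · rw [s1 r (by omega), hzx (by omega) (by omega)]
      exact sgnQ_lt (hc.xz r (by omega) q (by omega))
    · rw [s2 r (by omega), hzy (by omega) (by omega)]
      exact sgnQ_lt (hc.yz r (by omega) q (by omega))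

def hfun (d1 d3 : ℤ) : ℤ :=
  if (0 ≤ d1 ∧ 0 ≤ d3) ∨ (d1 ≤ 0 ∧ d3 ≤ 0) then d3 - d1
  else if (0 ≤ d3 ∧ d1 + d3 ≤ 0) ∨ (d3 ≤ 0 ∧ 0 ≤ d1 + d3) then -d1 else d3

lemma hfun_neg (d1 d3 : ℤ) : hfun (-d1) (-d3) = - hfun d1 d3 := by
  unfold hfun; split_ifs <;> omega

lemma Ht_rows_half (K : Type) [Field K] [CharZero K] (P : Set Circle1) {n N : ℕ} (o : Circle1)
    (v a b : Fin n → ↥P) (x y z : ℕ → ↥P) (hc : Cfg o x y z N) (i j k i' j' k' : ℕ)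
    (ha : IsRows x y z a i j k) (hb : IsRows x y z b i' j' k')
    (hi : i ≤ N) (hj : j ≤ N) (hk : k ≤ N) (hi' : i' ≤ N) (hj' : j' ≤ N) (hk' : k' ≤ N)
    (hs : i + j + k = i' + j' + k')
    (hcase : (j ≤ j' ∧ k ≤ k') ∨ (i ≤ i' ∧ k ≤ k') ∨ (i ≤ i' ∧ j ≤ j')) :
    Ht K P o v a b = ((hfun ((i':ℤ) - i) ((k':ℤ) - k) : ℤ) : SwapRing K P) *
      (Dmat K P n a v * Dmat K P n b v) := by
  have cast : ∀ q : ℚ, ∀ z : ℤ, q = z → C ((q : ℚ) : K) = ((z : ℤ) : SwapRing K P) := by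
    rintro q z rfl; simp
  rcases hcase with h | h | h
  · rw [Ht_rows_aux K P o v a b x y z hc i j k i' j' k' ha hb hi hj hk hi' hj' hk' 0 1 1]
    · congr 1
      apply cast
      have : hfun ((i':ℤ) - i) ((k':ℤ) - k) = ((j' - j : ℕ) : ℤ) + ((k' - k : ℕ) : ℤ) := by
        unfold hfun; split_ifs <;> omega
      rw [this]; push_cast; ring
    all_goals (intros; first | rfl | omega)
  · rw [Ht_rows_aux K P o v a b x y z hc i j k i' j' k' ha hb hi hj hk hi' hj' hk' (-1) 0 1]
    · congr 1
      apply cast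
      have : hfun ((i':ℤ) - i) ((k':ℤ) - k) = -((i' - i : ℕ) : ℤ) + ((k' - k : ℕ) : ℤ) := by
        unfold hfun; split_ifs <;> omega
      rw [this]; push_cast; ring
    all_goals (intros; first | rfl | omega)
  · rw [Ht_rows_aux K P o v a b x y z hc i j k i' j' k' ha hb hi hj hk hi' hj' hk' (-1) (-1) 0]
    · congr 1
      apply cast
      have : hfun ((i':ℤ) - i) ((k':ℤ) - k) = -((i' - i : ℕ) : ℤ) - ((j' - j : ℕ) : ℤ) := by
        unfold hfun; split_ifs <;> omega
      rw [this]; push_cast; ring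
    all_goals (intros; first | rfl | omega)

lemma Ht_rows (K : Type) [Field K] [CharZero K] (P : Set Circle1) {n N : ℕ} (o : Circle1)
    (v a b : Fin n → ↥P) (x y z : ℕ → ↥P) (hc : Cfg o x y z N) (i j k i' j' k' : ℕ)
    (ha : IsRows x y z a i j k) (hb : IsRows x y z b i' j' k')
    (hi : i ≤ N) (hj : j ≤ N) (hk : k ≤ N) (hi' : i' ≤ N) (hj' : j' ≤ N) (hk' : k' ≤ N)
    (hs : i + j + k = i' + j' + k') :
    Ht K P o v a b = ((hfun ((i':ℤ) - i) ((k':ℤ) - k) : ℤ) : SwapRing K P) *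
      (Dmat K P n a v * Dmat K P n b v) := by
  by_cases hcase : (j ≤ j' ∧ k ≤ k') ∨ (i ≤ i' ∧ k ≤ k') ∨ (i ≤ i' ∧ j ≤ j')
  · exact Ht_rows_half K P o v a b x y z hc i j k i' j' k' ha hb hi hj hk hi' hj' hk' hs hcase
  · rw [Ht_neg, Ht_rows_half K P o v b a x y z hc i' j' k' i j k hb ha hi' hj' hk' hi hj hk
      hs.symm (by omega), show ((i':ℤ) - i) = -((i:ℤ) - i') by ring,
      show ((k':ℤ) - k) = -((k:ℤ) - k') by ring, hfun_neg]
    push_cast; ring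

lemma rows3s_isRows {α : Type*} {n : ℕ} (x y z : ℕ → α) (a b c : ℕ) (w : α) (hn : n = a + b + c + 1) :
    Multiset.map (rows3s (n := n) x y z a b w) Finset.univ.val =
    (Multiset.range a).map x + (Multiset.range b).map y + (Multiset.range c).map z + {w} := by
  subst hn
  let g : ℕ → α := fun i => if i < a then x i
    else if i < a + b then y (i - a)
    else if i < a + b + c then z (i - (a + b)) else w
  have h1 : Multiset.map (rows3s (n := a + b + c + 1) x y z a b w) Finset.univ.val
      = Multiset.map g (Multiset.range (a + b + c + 1)) := by
    have : (rows3s (n := a + b + c + 1) x y z a b w) = fun i : Fin (a + b + c + 1) => g (i : ℕ) := rfl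
    rw [this, ← Function.comp_def g, ← Multiset.map_map]
    congr 1
    have h2 : (Finset.univ : Finset (Fin (a + b + c + 1))).map Fin.valEmbedding
        = Finset.range (a + b + c + 1) := by
      ext i
      simp only [Finset.mem_map, Finset.mem_univ, true_and, Finset.mem_range]
      exact ⟨fun ⟨j, hj⟩ => hj ▸ j.2, fun h => ⟨⟨i, h⟩, rfl⟩⟩
    exact congrArg Finset.val h2
  rw [h1, Multiset.range_add, Multiset.range_add, Multiset.range_add]
  simp only [Multiset.map_add, Multiset.map_map]
  have q1 : Multiset.map g (Multiset.range a) = Multiset.map x (Multiset.range a) :=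
    Multiset.map_congr rfl fun i hi => if_pos (Multiset.mem_range.1 hi)
  have q2 : Multiset.map (g ∘ (fun i => a + i)) (Multiset.range b) = Multiset.map y (Multiset.range b) :=
    Multiset.map_congr rfl fun i hi => by
      have := Multiset.mem_range.1 hi
      simp [g, this]
  have q3 : Multiset.map (g ∘ (fun i => a + b + i)) (Multiset.range c) = Multiset.map z (Multiset.range c) :=
    Multiset.map_congr rfl fun i hi => by
      have := Multiset.mem_range.1 hi
      simp only [g, Function.comp]
      rw [if_neg (by omega), if_neg (by omega), if_pos (by omega)]; congr 1; omega
  have q4 : Multiset.map (g ∘ (fun i => a + b + c + i)) (Multiset.range 1) = {w} := by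
    simp only [Multiset.range_succ, Multiset.range_zero, Function.comp]
    simp [g]
    intros; omega
  rw [q1, q2, q3, q4]

lemma isRows_x {α : Type*} {n : ℕ} (x y z : ℕ → α) (a b c : ℕ) (hn : n = a + b + c + 1) :
    IsRows x y z (rows3s (n := n) x y z a b (x a)) (a + 1) b c := by
  unfold IsRows
  rw [rows3s_isRows x y z a b c _ hn, Multiset.range_succ, Multiset.map_cons,
    ← Multiset.singleton_add]
  abel

lemma isRows_y {α : Type*} {n : ℕ} (x y z : ℕ → α) (a b c : ℕ) (hn : n = a + b + c + 1) :
    IsRows x y z (rows3s (n := n) x y z a b (y b)) a (b + 1) c := by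
  unfold IsRows
  rw [rows3s_isRows x y z a b c _ hn, Multiset.range_succ, Multiset.map_cons,
    ← Multiset.singleton_add]
  abel

lemma isRows_z {α : Type*} {n : ℕ} (x y z : ℕ → α) (a b c : ℕ) (hn : n = a + b + c + 1) :
    IsRows x y z (rows3s (n := n) x y z a b (z c)) a b (c + 1) := by
  unfold IsRows
  rw [rows3s_isRows x y z a b c _ hn, Multiset.range_succ, Multiset.map_cons,
    ← Multiset.singleton_add]
  abel

def Thex (e1 e3 : ℤ) : ℤ := hfun (e1 + 1) (e3 - 1) + hfun (e1 - 1) e3 + hfun e1 (e3 + 1)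
  - hfun (e1 + 1) e3 - hfun e1 (e3 - 1) - hfun (e1 - 1) (e3 + 1)

lemma Thex_zero : Thex 0 0 = 2 := by decide

lemma Thex_ne (e1 e3 : ℤ) (h : ¬ (e1 = 0 ∧ e3 = 0)) : Thex e1 e3 = 0 := by
  unfold Thex
  rcases lt_trichotomy e1 0 with h1 | h1 | h1 <;> rcases lt_trichotomy e3 0 with h2 | h2 | h2 <;>
  rcases lt_trichotomy (e1 + e3) 0 with h3 | h3 | h3 <;>
  first
  | (exfalso; omega)
  | (simp only [hfun]
     repeat (first | rw [if_pos (by omega)] | rw [if_neg (by omega)])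
     omega)

lemma quot_br (K : Type) [Field K] [CharZero K] (P : Set Circle1) {n : ℕ} (o : Circle1)
    (Bq : QnRing K P n → QnRing K P n → QnRing K P n) (hB : IsQnBracket K P n 1 0 Bq)
    (v a a' b b' : Fin n → ↥P)
    (h : toZn K P n (Dmat K P n a' v) ∈ nonZeroDivisors (ZnRing K P n))
    (h' : toZn K P n (Dmat K P n b' v) ∈ nonZeroDivisors (ZnRing K P n))
    (c1 c2 c3 c4 : ℤ)
    (e1 : Ht K P o v a b = (c1 : SwapRing K P) * (Dmat K P n a v * Dmat K P n b v))
    (e2 : Ht K P o v a' b = (c2 : SwapRing K P) * (Dmat K P n a' v * Dmat K P n b v))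
    (e3 : Ht K P o v a b' = (c3 : SwapRing K P) * (Dmat K P n a v * Dmat K P n b' v))
    (e4 : Ht K P o v a' b' = (c4 : SwapRing K P) * (Dmat K P n a' v * Dmat K P n b' v)) :
    2 * Bq (EQuot K P n a a' v h) (EQuot K P n b b' v h') =
      ((c1 - c2 - c3 + c4 : ℤ) : QnRing K P n) *
        (EQuot K P n a a' v h * EQuot K P n b b' v h') := by
  obtain ⟨hB1, hB2, hB3⟩ := hB
  have br : ∀ (a b : Fin n → ↥P) (c : ℤ),
      Ht K P o v a b = (c : SwapRing K P) * (Dmat K P n a v * Dmat K P n b v) →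
      2 * Bq (toQn K P n (Dmat K P n a v)) (toQn K P n (Dmat K P n b v)) =
      (c : QnRing K P n) * (toQn K P n (Dmat K P n a v) * toQn K P n (Dmat K P n b v))
      + toQn K P n (Gt K P o v a) * toQn K P n (Dmat K P n b v)
      - toQn K P n (Dmat K P n a v) * toQn K P n (Gt K P o v b) := by
    intro a b c hc
    have := congrArg (toQn K P n) (det_br K P o v a b)
    rw [hc] at this
    rw [hB1]
    simpa only [map_mul, map_add, map_sub, map_ofNat, map_intCast] using this
  have spec : ∀ (a a' : Fin n → ↥P)
      (h : toZn K P n (Dmat K P n a' v) ∈ nonZeroDivisors (ZnRing K P n)),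
      EQuot K P n a a' v h * toQn K P n (Dmat K P n a' v) = toQn K P n (Dmat K P n a v) := by
    intro a a' h
    rw [EQuot, Localization.mk_eq_mk']
    exact IsLocalization.mk'_spec _ _ _
  have un : ∀ (a' : Fin n → ↥P)
      (h : toZn K P n (Dmat K P n a' v) ∈ nonZeroDivisors (ZnRing K P n)),
      IsUnit (toQn K P n (Dmat K P n a' v)) := by
    intro a' h
    exact IsLocalization.map_units (QnRing K P n) (⟨_, h⟩ : nonZeroDivisors (ZnRing K P n))
  have b1 := br a b c1 e1
  have b2 := br a' b c2 e2
  have b3 := br a b' c3 e3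
  have b4 := br a' b' c4 e4
  have sp := spec a a' h
  have sp' := spec b b' h'
  have u := un a' h
  have u' := un b' h'
  generalize EQuot K P n a a' v h = q at *
  generalize EQuot K P n b b' v h' = q' at *
  generalize toQn K P n (Dmat K P n a v) = A at *
  generalize toQn K P n (Dmat K P n a' v) = A' at *
  generalize toQn K P n (Dmat K P n b v) = B at *
  generalize toQn K P n (Dmat K P n b' v) = B' at *
  subst sp
  subst sp'
  have l1 := hB2 q A' (q' * B')
  have l2 := hB2 q A' B'
  have l3 := hB3 q q' B'
  apply (u.mul u').mul_left_cancel
  push_cast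
  linear_combination (-2 * A') * l3 - 2 * l1 + 2 * q' * l2 + b1 - q * b2 - q' * b3 + q * q' * b4

lemma prod_br {A : Type*} [CommRing A] (Bq : A → A → A)
    (hB2 : ∀ a b c, Bq (a * b) c = a * Bq b c + b * Bq a c)
    (hB3 : ∀ a b c, Bq a (b * c) = b * Bq a c + c * Bq a b)
    (q1 q2 q3 r1 r2 r3 c11 c12 c13 c21 c22 c23 c31 c32 c33 : A)
    (h11 : 2 * Bq q1 r1 = c11 * (q1 * r1)) (h12 : 2 * Bq q1 r2 = c12 * (q1 * r2))
    (h13 : 2 * Bq q1 r3 = c13 * (q1 * r3))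
    (h21 : 2 * Bq q2 r1 = c21 * (q2 * r1)) (h22 : 2 * Bq q2 r2 = c22 * (q2 * r2))
    (h23 : 2 * Bq q2 r3 = c23 * (q2 * r3))
    (h31 : 2 * Bq q3 r1 = c31 * (q3 * r1)) (h32 : 2 * Bq q3 r2 = c32 * (q3 * r2))
    (h33 : 2 * Bq q3 r3 = c33 * (q3 * r3)) :
    2 * Bq (q1 * q2 * q3) (r1 * r2 * r3) = (c11 + c12 + c13 + c21 + c22 + c23 + c31 + c32 + c33) *
      ((q1 * q2 * q3) * (r1 * r2 * r3)) := by
  simp only [hB2, hB3]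
  linear_combination q2*q3*r2*r3*h11 + q2*q3*r1*r3*h12 + q2*q3*r1*r2*h13
    + q1*q3*r2*r3*h21 + q1*q3*r1*r3*h22 + q1*q3*r1*r2*h23
    + q1*q2*r2*r3*h31 + q1*q2*r1*r3*h32 + q1*q2*r1*r2*h33

def RowAt {α : Type*} {n : ℕ} (x y z : ℕ → α) (a : Fin n → α) (u1 u3 : ℤ) : Prop :=
  ∃ i j k : ℕ, IsRows x y z a i j k ∧ i ≤ n - 1 ∧ j ≤ n - 1 ∧ k ≤ n - 1 ∧ i + j + k = n ∧
    (i : ℤ) = u1 ∧ (k : ℤ) = u3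

lemma RowAt.br (K : Type) [Field K] [CharZero K] (P : Set Circle1) {n : ℕ} (o : Circle1)
    (Bq : QnRing K P n → QnRing K P n → QnRing K P n) (hB : IsQnBracket K P n 1 0 Bq)
    (v a a' b b' : Fin n → ↥P) (x y z : ℕ → ↥P) (hc : Cfg o x y z (n - 1))
    (h : toZn K P n (Dmat K P n a' v) ∈ nonZeroDivisors (ZnRing K P n))
    (h' : toZn K P n (Dmat K P n b' v) ∈ nonZeroDivisors (ZnRing K P n))
    (u1 u3 u1' u3' w1 w3 w1' w3' : ℤ)
    (ra : RowAt x y z a u1 u3) (ra' : RowAt x y z a' u1' u3')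
    (rb : RowAt x y z b w1 w3) (rb' : RowAt x y z b' w1' w3') :
    2 * Bq (EQuot K P n a a' v h) (EQuot K P n b b' v h') =
      ((hfun (w1 - u1) (w3 - u3) - hfun (w1 - u1') (w3 - u3') - hfun (w1' - u1) (w3' - u3)
        + hfun (w1' - u1') (w3' - u3') : ℤ) : QnRing K P n) *
        (EQuot K P n a a' v h * EQuot K P n b b' v h') := by
  have H : ∀ (a b : Fin n → ↥P) (u1 u3 w1 w3 : ℤ), RowAt x y z a u1 u3 → RowAt x y z b w1 w3 →
      Ht K P o v a b = ((hfun (w1 - u1) (w3 - u3) : ℤ) : SwapRing K P) *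
      (Dmat K P n a v * Dmat K P n b v) := by
    rintro a b _ _ _ _ ⟨i, j, k, h1, h2, h3, h4, h5, rfl, rfl⟩
      ⟨i', j', k', h1', h2', h3', h4', h5', rfl, rfl⟩
    exact Ht_rows K P o v a b x y z hc i j k i' j' k' h1 h1' h2 h3 h4 h2' h3' h4'
      (h5.trans h5'.symm)
  exact quot_br K P o Bq hB v a a' b b' h h' _ _ _ _ (H _ _ _ _ _ _ ra rb) (H _ _ _ _ _ _ ra' rb)
    (H _ _ _ _ _ _ ra rb') (H _ _ _ _ _ _ ra' rb')

lemma unit_of {A S : Type*} [CommRing A] [CommRing S] (f : S →+* A) {b : S} (h : 2 * b = 1) :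
    IsUnit (2 : A) := by
  have h2 := congrArg f h
  rw [map_mul, map_one, map_ofNat] at h2
  exact IsUnit.of_mul_eq_one _ h2

lemma fin_step {A : Type*} [CommRing A] {B q : A} {c : A} {t c' : ℤ} (h2 : IsUnit (2 : A))
    (hc : c = (c' : A)) (ht : c' = 2 * t) (h : 2 * B = c * q) : B = (t : A) * q := by
  apply h2.mul_left_cancel
  rw [h, hc, ht]
  push_cast; ring

lemma rowAts {α : Type*} {n : ℕ} (x y z : ℕ → α) (m l p : ℕ) (hm : 0 < m) (hl : 0 < l) (hp : 0 < p)
    (hs : m + l + p = n) :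
    RowAt x y z (rows3s (n := n) x y z (m+1) (l-1) (y (l-1))) ((m:ℤ) + 1) ((p:ℤ) - 1) ∧
    RowAt x y z (rows3s (n := n) x y z (m+1) (l-1) (z (p-1))) ((m:ℤ) + 1) (p:ℤ) ∧
    RowAt x y z (rows3s (n := n) x y z (m-1) (l+1) (z (p-1))) ((m:ℤ) - 1) (p:ℤ) ∧
    RowAt x y z (rows3s (n := n) x y z (m-1) (l+1) (x (m-1))) (m:ℤ) ((p:ℤ) - 1) ∧
    RowAt x y z (rows3s (n := n) x y z (m-1) (l-1) (x (m-1))) (m:ℤ) ((p:ℤ) + 1) ∧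
    RowAt x y z (rows3s (n := n) x y z (m-1) (l-1) (y (l-1))) ((m:ℤ) - 1) ((p:ℤ) + 1) := by
  have n1 : n = (m+1) + (l-1) + (p-1) + 1 := by omega
  have n2 : n = (m-1) + (l+1) + (p-1) + 1 := by omega
  have n3 : n = (m-1) + (l-1) + (p+1) + 1 := by omega
  refine ⟨⟨_, _, _, isRows_y x y z (m+1) (l-1) (p-1) n1, ?_⟩,
    ⟨_, _, _, isRows_z x y z (m+1) (l-1) (p-1) n1, ?_⟩,
    ⟨_, _, _, isRows_z x y z (m-1) (l+1) (p-1) n2, ?_⟩,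
    ⟨_, _, _, isRows_x x y z (m-1) (l+1) (p-1) n2, ?_⟩,
    ⟨_, _, _, isRows_x x y z (m-1) (l-1) (p+1) n3, ?_⟩,
    ⟨_, _, _, isRows_y x y z (m-1) (l-1) (p+1) n3, ?_⟩⟩ <;> clear n1 n2 n3 <;>
  refine ⟨?_, ?_, ?_, ?_, ?_, ?_⟩ <;> omega

lemma theta_br (K : Type) [Field K] [CharZero K] (P : Set Circle1)
    (n : ℕ) (x y z : ℕ → ↥P) (o : Circle1) (hc : Cfg o x y z (n - 1))
    (m l p m' l' p' : ℕ)
    (hm : 0 < m) (hl : 0 < l) (hp : 0 < p) (hm' : 0 < m') (hl' : 0 < l') (hp' : 0 < p')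
    (hs : m + l + p = n) (hs' : m' + l' + p' = n)
    (Bq : QnRing K P n → QnRing K P n → QnRing K P n) (hB : IsQnBracket K P n 1 0 Bq)
    (v : Fin n → ↥P)
    (hA1 : toZn K P n (Dmat K P n (rows3s x y z (m+1) (l-1) (z (p-1))) v)
          ∈ nonZeroDivisors (ZnRing K P n))
    (hA2 : toZn K P n (Dmat K P n (rows3s x y z (m-1) (l+1) (x (m-1))) v)
          ∈ nonZeroDivisors (ZnRing K P n))
    (hA3 : toZn K P n (Dmat K P n (rows3s x y z (m-1) (l-1) (y (l-1))) v)
          ∈ nonZeroDivisors (ZnRing K P n))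
    (hB1 : toZn K P n (Dmat K P n (rows3s x y z (m'+1) (l'-1) (z (p'-1))) v)
          ∈ nonZeroDivisors (ZnRing K P n))
    (hB2 : toZn K P n (Dmat K P n (rows3s x y z (m'-1) (l'+1) (x (m'-1))) v)
          ∈ nonZeroDivisors (ZnRing K P n))
    (hB3 : toZn K P n (Dmat K P n (rows3s x y z (m'-1) (l'-1) (y (l'-1))) v)
          ∈ nonZeroDivisors (ZnRing K P n))
    (d1 d3 t : ℤ) (hd1 : (m' : ℤ) = m + d1) (hd3 : (p' : ℤ) = p + d3)
    (ht : Thex (d1 - 1) (d3 + 1) + Thex (d1 + 1) d3 + Thex d1 (d3 - 1)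
      - Thex (d1 - 1) d3 - Thex d1 (d3 + 1) - Thex (d1 + 1) (d3 - 1) = 2 * t) :
    Bq (thetaTri K P n x y z m l p v hA1 hA2 hA3)
           (thetaTri K P n x y z m' l' p' v hB1 hB2 hB3) = (t : QnRing K P n) *
      (thetaTri K P n x y z m l p v hA1 hA2 hA3 * thetaTri K P n x y z m' l' p' v hB1 hB2 hB3) := by
  have two : IsUnit (2 : QnRing K P n) := by
    have h : (2 : SwapRing K P) * C (1/2 : K) = 1 := by
      rw [show (2 : SwapRing K P) = C 2 from (map_ofNat C 2).symm, ← C_mul]; simp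
    exact unit_of (A := QnRing K P n) (toQn K P n) h
  obtain ⟨r1, r2, r3, r4, r5, r6⟩ := rowAts x y z m l p hm hl hp hs
  obtain ⟨s1, s2, s3, s4, s5, s6⟩ := rowAts x y z m' l' p' hm' hl' hp' hs'
  have h11 := RowAt.br K P o Bq hB v _ _ _ _ x y z hc hA1 hB1 _ _ _ _ _ _ _ _ r1 r2 s1 s2
  have h12 := RowAt.br K P o Bq hB v _ _ _ _ x y z hc hA1 hB2 _ _ _ _ _ _ _ _ r1 r2 s3 s4
  have h13 := RowAt.br K P o Bq hB v _ _ _ _ x y z hc hA1 hB3 _ _ _ _ _ _ _ _ r1 r2 s5 s6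
  have h21 := RowAt.br K P o Bq hB v _ _ _ _ x y z hc hA2 hB1 _ _ _ _ _ _ _ _ r3 r4 s1 s2
  have h22 := RowAt.br K P o Bq hB v _ _ _ _ x y z hc hA2 hB2 _ _ _ _ _ _ _ _ r3 r4 s3 s4
  have h23 := RowAt.br K P o Bq hB v _ _ _ _ x y z hc hA2 hB3 _ _ _ _ _ _ _ _ r3 r4 s5 s6
  have h31 := RowAt.br K P o Bq hB v _ _ _ _ x y z hc hA3 hB1 _ _ _ _ _ _ _ _ r5 r6 s1 s2
  have h32 := RowAt.br K P o Bq hB v _ _ _ _ x y z hc hA3 hB2 _ _ _ _ _ _ _ _ r5 r6 s3 s4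
  have h33 := RowAt.br K P o Bq hB v _ _ _ _ x y z hc hA3 hB3 _ _ _ _ _ _ _ _ r5 r6 s5 s6
  have key := prod_br Bq hB.2.1 hB.2.2 _ _ _ _ _ _ _ _ _ _ _ _ _ _ _ h11 h12 h13 h21 h22 h23 h31 h32 h33
  simp only [← Int.cast_add] at key
  refine fin_step two rfl ?_ key
  rw [← ht, hd1, hd3]
  clear key h11 h12 h13 h21 h22 h23 h31 h32 h33
  simp only [Thex]
  ring_nf

/-- With `x_{n-1} ≺ … ≺ x_1 ≺ y_{n-1} ≺ … ≺ y_1 ≺ z_{n-1} ≺ … ≺ z_1`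
pairwise distinct points of `P` ordered anticlockwise, and `Θ(m,l,p)` the image of the
`(m,l,p)`-triple ratio of the triangle `xyz`, the normalized extended swapping bracket
`[Θ(m,l,p), Θ(m',l',p')]` (for positive triples summing to `n` with `l ≥ l'`) equals `0`
when the triples are equal or `l > l'+1`, and when `l = l'+1` it equals `1` if `m = m'`,
`-1` if `m' = m+1`, and `0` otherwise. -/
theorem bracket_triple_ratios (K : Type) [Field K] [CharZero K] (P : Set Circle1)
    (n : ℕ) (hn : 2 ≤ n) (x y z : ℕ → ↥P)
    (hcfg : AnticlockwiseList
      (descPts (fun i => ((x i : Circle1))) (n-1) ++ descPts (fun i => ((y i : Circle1))) (n-1)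
        ++ descPts (fun i => ((z i : Circle1))) (n-1)))
    (m l p m' l' p' : ℕ)
    (hm : 0 < m) (hl : 0 < l) (hp : 0 < p) (hm' : 0 < m') (hl' : 0 < l') (hp' : 0 < p')
    (hs : m + l + p = n) (hs' : m' + l' + p' = n) (hll : l' ≤ l) :
    ∀ Bq : QnRing K P n → QnRing K P n → QnRing K P n, IsQnBracket K P n 1 0 Bq →
    ∀ v : Fin n → ↥P, Function.Injective v →
    ∀ (hA1 : toZn K P n (Dmat K P n (rows3s x y z (m+1) (l-1) (z (p-1))) v)
          ∈ nonZeroDivisors (ZnRing K P n))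
      (hA2 : toZn K P n (Dmat K P n (rows3s x y z (m-1) (l+1) (x (m-1))) v)
          ∈ nonZeroDivisors (ZnRing K P n))
      (hA3 : toZn K P n (Dmat K P n (rows3s x y z (m-1) (l-1) (y (l-1))) v)
          ∈ nonZeroDivisors (ZnRing K P n))
      (hB1 : toZn K P n (Dmat K P n (rows3s x y z (m'+1) (l'-1) (z (p'-1))) v)
          ∈ nonZeroDivisors (ZnRing K P n))
      (hB2 : toZn K P n (Dmat K P n (rows3s x y z (m'-1) (l'+1) (x (m'-1))) v)
          ∈ nonZeroDivisors (ZnRing K P n))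
      (hB3 : toZn K P n (Dmat K P n (rows3s x y z (m'-1) (l'-1) (y (l'-1))) v)
          ∈ nonZeroDivisors (ZnRing K P n)),
      (((m = m' ∧ l = l' ∧ p = p') ∨ l' + 1 < l) →
        Bq (thetaTri K P n x y z m l p v hA1 hA2 hA3)
           (thetaTri K P n x y z m' l' p' v hB1 hB2 hB3) = 0) ∧
      (l = l' + 1 →
        ((m = m' →
          Bq (thetaTri K P n x y z m l p v hA1 hA2 hA3)
             (thetaTri K P n x y z m' l' p' v hB1 hB2 hB3)
            = thetaTri K P n x y z m l p v hA1 hA2 hA3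
              * thetaTri K P n x y z m' l' p' v hB1 hB2 hB3) ∧
         (m' = m + 1 →
          Bq (thetaTri K P n x y z m l p v hA1 hA2 hA3)
             (thetaTri K P n x y z m' l' p' v hB1 hB2 hB3)
            = - (thetaTri K P n x y z m l p v hA1 hA2 hA3
                * thetaTri K P n x y z m' l' p' v hB1 hB2 hB3)) ∧
         (m ≠ m' ∧ m' ≠ m + 1 →
          Bq (thetaTri K P n x y z m l p v hA1 hA2 hA3)
             (thetaTri K P n x y z m' l' p' v hB1 hB2 hB3) = 0))) := by
  intro Bq hB v _ hA1 hA2 hA3 hB1 hB2 hB3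
  obtain ⟨o, hc⟩ := cfg_of x y z (n-1) hcfg
  have main := theta_br K P n x y z o hc m l p m' l' p' hm hl hp hm' hl' hp' hs hs' Bq hB v
    hA1 hA2 hA3 hB1 hB2 hB3 ((m':ℤ) - m) ((p':ℤ) - p)
  have T0 : ∀ a b : ℤ, Thex a b = if a = 0 ∧ b = 0 then 2 else 0 := by
    intro a b
    by_cases h : a = 0 ∧ b = 0
    · rw [if_pos h, h.1, h.2]; exact Thex_zero
    · rw [if_neg h]; exact Thex_ne a b h
  simp only [T0] at main
  refine ⟨fun h => ?_, fun h => ⟨fun h2 => ?_, fun h2 => ?_, fun h2 => ?_⟩⟩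
  · rw [main 0 (by ring) (by ring) (by split_ifs <;> omega)]; simp
  · rw [main 1 (by ring) (by ring) (by split_ifs <;> omega)]; simp
  · rw [main (-1) (by ring) (by ring) (by split_ifs <;> omega)]; simp
  · rw [main 0 (by ring) (by ring) (by split_ifs <;> omega)]; simp

end
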